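/- (Error estimate on the principal eigenvalue.) In the torus setting described in the context, let 𝓛φ = b·∇φ + (σ²/2)Δφ with b a smooth ℤ^d-periodic vector field and σ > 0, and suppose in addition to the hypotheses of the invariant-measure error estimate that the scheme is consistent at order p: Ã_k = (𝓛+W)^k / k! for k = 1, …, p (in particular A_1 = 𝓛), that (𝓛+W)ĥ_W = λ ĥ_W, and that h_W satisfies the weak adjoint eigenvalue equation ∫ ((𝓛+W)φ) h_W dν = λ ∫ φ h_W dν for all φ ∈ S. Define λ_{p+1} = ∫ Ã_{p+1}1 dν_W + ∫ W f dν_W, with f the correction function defined from Ã_{p+1}, h_W, ĥ_W, λ as in the invariant-measure error estimate. Then there exist Δt* > 0 and C > 0 such that for all Δt ∈ (0,Δt*], the approximate eigenvalue λ_Δt := (1/Δt) log (∫ Q_Δt^W 1 dν_{W,Δt}) satisfies |λ_Δt − λ − Δt^p (λ_{p+1} − λ^{p+1}/(p+1)!)| ≤ C Δt^{p+1}. -/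

import Mathlib

open MeasureTheory ProbabilityTheory Finset

/-- The d-dimensional torus `ℝ^d/ℤ^d`. -/
abbrev Torus (d : ℕ) := Fin d → AddCircle (1:ℝ)

/-- The canonical projection `ℝ^d → ℝ^d/ℤ^d`. -/
noncomputable def Torus.proj {d : ℕ} (q : Fin d → ℝ) : Torus d := fun i => (q i : AddCircle (1:ℝ))

/-- Partial derivative in the i-th coordinate direction. -/
noncomputable def pderiv' {d : ℕ} (i : Fin d) (f : (Fin d → ℝ) → ℝ) (q : Fin d → ℝ) : ℝ :=
  fderiv ℝ f q (Pi.single i 1)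

/-- ℤ^d-periodicity. -/
def ZPeriodic {d : ℕ} (f : (Fin d → ℝ) → ℝ) : Prop :=
  ∀ (q : Fin d → ℝ) (m : Fin d → ℤ), f (fun i => q i + (m i : ℝ)) = f q

/-- Iterated partial derivative `∂^α` along a list of coordinate directions. -/
noncomputable def iterPDeriv {d : ℕ} : List (Fin d) → ((Fin d → ℝ) → ℝ) → (Fin d → ℝ) → ℝ
  | [], f => f
  | i :: l, f => pderiv' i (iterPDeriv l f)

/-- The C^m norm: `‖f‖_{C^m} = sup_{|α| ≤ m} sup_q |∂^α f(q)|`. -/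
noncomputable def CmNorm {d : ℕ} (m : ℕ) (f : (Fin d → ℝ) → ℝ) : ℝ :=
  ⨆ p : {l : List (Fin d) // l.length ≤ m} × (Fin d → ℝ), |iterPDeriv p.1.1 f p.2|

/-- A function on the torus is smooth when its ℤ^d-periodic lift to ℝ^d is smooth;
this identifies S with the smooth ℤ^d-periodic functions on ℝ^d. -/
def TSmooth {d : ℕ} (φ : Torus d → ℝ) : Prop :=
  ContDiff ℝ (⊤ : ℕ∞) (fun q : Fin d → ℝ => φ (Torus.proj q))

/-- The C^m norm of a function on the torus, computed through its periodic lift. -/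
noncomputable def TCmNorm {d : ℕ} (m : ℕ) (φ : Torus d → ℝ) : ℝ :=
  CmNorm m (fun q : Fin d → ℝ => φ (Torus.proj q))

/-- The unit cube `[0,1)^d`, a fundamental domain of the torus. -/
def unitCube (d : ℕ) : Set (Fin d → ℝ) := Set.univ.pi fun _ => Set.Ico (0:ℝ) 1

/-- The action of a weighted evolution operator given by a kernel. -/
noncomputable def evolOp {X : Type*} [MeasurableSpace X] (κ : Kernel X X) (φ : X → ℝ) : X → ℝ :=
  fun q => ∫ q', φ q' ∂(κ q)

/-- Bounded measurable real-valued functions. -/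
def BddMeas {X : Type*} [MeasurableSpace X] (φ : X → ℝ) : Prop :=
  Measurable φ ∧ ∃ C : ℝ, ∀ x, |φ x| ≤ C

/-- Minorization condition. -/
def Minorizes {X : Type*} [MeasurableSpace X] (Q : (X → ℝ) → (X → ℝ)) (ε : ℝ)
    (η : Measure X) : Prop :=
  ∀ φ : X → ℝ, BddMeas φ → (∀ x, 0 ≤ φ x) → ∀ q,
    ε * ∫ x, φ x ∂η ≤ Q φ q ∧ Q φ q ≤ ε⁻¹ * ∫ x, φ x ∂η

/-- Fixed-point (stationarity) equation characterizing the invariant probability measure. -/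
def FixedPt {X : Type*} [MeasurableSpace X] (κ : Kernel X X) (μ : Measure X) : Prop :=
  ∀ φ : X → ℝ, BddMeas φ →
    ∫ q, evolOp κ φ q ∂μ = (∫ q, evolOp κ (fun _ => (1:ℝ)) q ∂μ) * ∫ q, φ q ∂μ

/-- The generator `𝓛φ = b·∇φ + (σ²/2)Δφ` acting on periodic lifts. -/
noncomputable def Lgen {d : ℕ} (b : Fin d → (Fin d → ℝ) → ℝ) (σ : ℝ)
    (f : (Fin d → ℝ) → ℝ) : (Fin d → ℝ) → ℝ :=
  fun q => (∑ i : Fin d, b i q * pderiv' i f q)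
    + σ ^ 2 / 2 * ∑ i : Fin d, pderiv' i (pderiv' i f) q

/-- The operator `𝓛 + W` acting on periodic lifts. -/
noncomputable def LgenW {d : ℕ} (b : Fin d → (Fin d → ℝ) → ℝ) (σ : ℝ)
    (Wl f : (Fin d → ℝ) → ℝ) : (Fin d → ℝ) → ℝ :=
  fun q => Lgen b σ f q + Wl q * f q

section Aux
open Asymptotics Filter Topology
theorem log_bigO : (fun x : ℝ => Real.log (1+x) - x) =O[𝓝 0] fun x => x^2 := by
  apply IsBigO.of_bound 2
  have : ∀ᶠ x in 𝓝 (0:ℝ), |x| < 1/2 := by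
    have := (continuous_abs.tendsto (0:ℝ)); rw [abs_zero] at this
    exact this.eventually_lt_const (by norm_num)
  filter_upwards [this] with x hx
  have h := Real.abs_log_sub_add_sum_range_le (x := -x) (by rw [abs_neg]; linarith) 1
  simp at h
  rw [Real.norm_eq_abs, norm_pow, Real.norm_eq_abs, show Real.log (1+x) - x = -x + Real.log (1+x) by ring]
  refine h.trans ?_
  rw [div_le_iff₀ (by linarith), ← sq_abs]
  nlinarith [sq_nonneg |x|]

theorem analytic (p : ℕ) (hp : 1 ≤ p) (L H U B : ℝ → ℝ) (lam α c0 M K t0 : ℝ) (ht0 : 0 < t0)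
    (hc0 : 0 < c0)
    (hH : ∀ t ∈ Set.Ioc (0:ℝ) t0, c0 ≤ H t) (hU : ∀ t ∈ Set.Ioc (0:ℝ) t0, |U t| ≤ M)
    (h1 : ∀ t ∈ Set.Ioc (0:ℝ) t0, |L t * H t
      - (∑ k ∈ Finset.range (p+1), (t*lam)^k / (Nat.factorial k)) * H t - t^(p+1) * B t| ≤ K * t^(p+2))
    (h2 : ∀ t ∈ Set.Ioc (0:ℝ) t0, |L t * U t - U t
      - t * (lam * U t + α * H t - B t)| ≤ K * t^2) :
    ∃ Δtstar ∈ Set.Ioc (0:ℝ) t0, ∃ C : ℝ, 0 < C ∧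
      ∀ t ∈ Set.Ioc (0:ℝ) Δtstar,
        |(1 / t) * Real.log (L t) - lam - t ^ p * (α - lam ^ (p + 1) / (Nat.factorial (p + 1)))|
          ≤ C * t ^ (p + 1) := by
  set l : Filter ℝ := 𝓝[>] (0:ℝ) with hl
  have hlid : Tendsto (fun t : ℝ => t) l (𝓝 0) := tendsto_nhdsWithin_of_tendsto_nhds tendsto_id
  have hev : ∀ᶠ t in l, t ∈ Set.Ioc (0:ℝ) t0 := Ioc_mem_nhdsGT ht0
  have hpow : ∀ {a b : ℕ}, b ≤ a → (fun t : ℝ => t^a) =O[l] fun t => t^b := by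
    intro a b hab
    have h : (fun t : ℝ => t^(a-b)) =O[l] fun _ => (1:ℝ) := (hlid.pow (a-b)).isBigO_one ℝ
    have h' := (isBigO_refl (fun t : ℝ => t^b) l).mul h
    simpa [← pow_add, Nat.add_sub_cancel' hab] using h'
  set S : ℝ → ℝ := fun t => ∑ k ∈ Finset.range (p+1), (t*lam)^k / (Nat.factorial k) with hS
  have R1 : (fun t => L t * H t - S t * H t - t^(p+1) * B t) =O[l] fun t => t^(p+2) := by
    apply IsBigO.of_bound K
    filter_upwards [hev] with t ht
    have := h1 t ht
    rwa [Real.norm_eq_abs, Real.norm_eq_abs, abs_of_pos (pow_pos ht.1 _)]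
  have R2 : (fun t => L t * U t - U t - t * (lam * U t + α * H t - B t)) =O[l] fun t => t^2 := by
    apply IsBigO.of_bound K
    filter_upwards [hev] with t ht
    have := h2 t ht
    rwa [Real.norm_eq_abs, Real.norm_eq_abs, abs_of_pos (pow_pos ht.1 _)]
  have RU : U =O[l] fun _ => (1:ℝ) := by
    apply IsBigO.of_bound M
    filter_upwards [hev] with t ht
    simpa using hU t ht
  have hE : ∀ n : ℕ, (fun t => Real.exp (t*lam) - ∑ k ∈ Finset.range n, (t*lam)^k / (Nat.factorial k))
      =O[l] fun t => t^n := by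
    intro n
    have h := Real.exp_sub_sum_range_isBigO_pow n
    have ht : Tendsto (fun t : ℝ => t * lam) l (𝓝 0) := by simpa using hlid.mul_const lam
    have h' := h.comp_tendsto ht
    refine h'.trans ?_
    simp only [Function.comp_def, mul_pow]
    simpa using (isBigO_refl (fun t : ℝ => t^n) l).mul (isBigO_const_const (lam^n) (one_ne_zero (α := ℝ)) l)
  have RS : (fun t => 1 + t * lam - S t - t^(p+1) * α) =O[l] fun t => t^2 := by
    have a := (hE 2).neg_left
    have b := (hE (p+1)).trans (hpow (show 2 ≤ p+1 by omega))
    have c : (fun t : ℝ => t^(p+1) * α) =O[l] fun t => t^2 := by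
      simpa [mul_comm] using (hpow (show 2 ≤ p+1 by omega)).const_mul_left α
    refine ((a.add b).sub c).congr_left fun t => ?_
    simp [Finset.sum_range_succ, hS]
  have hpU : Tendsto (fun t => t^p * U t) l (𝓝 0) := by
    have : (fun t => t^p * U t) =O[l] fun t : ℝ => t^1 := by
      simpa using (hpow hp).mul RU
    exact this.trans_tendsto (by simpa using hlid)
  have hden : ∀ᶠ t in l, c0/2 ≤ H t + t^p * U t := by
    filter_upwards [hev, hpU.eventually_const_lt (show -(c0/2) < 0 by linarith)] with t ht h
    have := hH t ht
    linarith
  have RD : (fun t => L t - S t - t^(p+1) * α) =O[l] fun t => t^(p+2) := by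
    have hnum : (fun t => (L t - S t - t^(p+1) * α) * (H t + t^p * U t)) =O[l] fun t => t^(p+2) := by
      have a : (fun t => t^p * (L t * U t - U t - t * (lam * U t + α * H t - B t))) =O[l]
          fun t => t^(p+2) := by
        simpa [pow_add] using (isBigO_refl (fun t : ℝ => t^p) l).mul R2
      have b : (fun t => t^p * (U t * (1 + t * lam - S t - t^(p+1) * α))) =O[l]
          fun t => t^(p+2) := by
        simpa [pow_add] using (isBigO_refl (fun t : ℝ => t^p) l).mul (RU.mul RS)
      refine ((R1.add a).add b).congr_left fun t => ?_
      ring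
    have hinv : (fun t => (H t + t^p * U t)⁻¹) =O[l] fun _ => (1:ℝ) := by
      apply IsBigO.of_bound (c0/2)⁻¹
      filter_upwards [hden] with t h
      have : 0 < H t + t^p * U t := by linarith
      rw [norm_inv, Real.norm_eq_abs, abs_of_pos this, norm_one, mul_one]
      exact inv_anti₀ (by linarith) h
    have := hnum.mul hinv
    refine this.congr' ?_ (by simp)
    filter_upwards [hden] with t h
    have : 0 < H t + t^p * U t := by linarith
    field_simp
  set β := α - lam^(p+1) / (Nat.factorial (p+1)) with hβ
  have RL : (fun t => L t - Real.exp (t*lam) - t^(p+1) * β) =O[l] fun t => t^(p+2) := by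
    refine (RD.sub (hE (p+2))).congr_left fun t => ?_
    rw [Finset.sum_range_succ, hβ, hS, mul_pow]
    ring
  have hexp1 : (fun t => Real.exp (-(t*lam)) - 1) =O[l] fun t => t := by
    have h := Real.exp_sub_sum_range_isBigO_pow 1
    have ht : Tendsto (fun t : ℝ => -(t * lam)) l (𝓝 0) := by simpa using (hlid.mul_const lam).neg
    have h' := h.comp_tendsto ht
    simp [Function.comp_def] at h'
    refine h'.trans ?_
    simpa using (isBigO_refl (fun t : ℝ => t) l).mul (isBigO_const_const lam (one_ne_zero (α := ℝ)) l)
  have hexpb : (fun t => Real.exp (-(t*lam))) =O[l] fun _ => (1:ℝ) := by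
    have ht : Tendsto (fun t : ℝ => Real.exp (-(t * lam))) l (𝓝 (Real.exp (-(0*lam)))) :=
      (Real.continuous_exp.tendsto _).comp (hlid.mul_const lam).neg
    exact ht.isBigO_one ℝ
  set x : ℝ → ℝ := fun t => Real.exp (-(t*lam)) * L t - 1 with hx
  have Rx : (fun t => x t - t^(p+1) * β) =O[l] fun t => t^(p+2) := by
    have a : (fun t => Real.exp (-(t*lam)) * (L t - Real.exp (t*lam) - t^(p+1) * β)) =O[l]
        fun t => t^(p+2) := by simpa using hexpb.mul RL
    have b : (fun t => β * (t^(p+1) * (Real.exp (-(t*lam)) - 1))) =O[l] fun t => t^(p+2) := by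
      have := ((isBigO_refl (fun t : ℝ => t^(p+1)) l).mul hexp1).const_mul_left β
      simpa [pow_succ] using this
    refine (a.add b).congr_left fun t => ?_
    simp only [hx]
    have : Real.exp (-(t*lam)) * Real.exp (t*lam) = 1 := by rw [← Real.exp_add]; simp
    linear_combination -this
  have Rx1 : x =O[l] fun t => t^(p+1) := by
    have a := Rx.trans (hpow (show p+1 ≤ p+2 by omega))
    have b := (isBigO_refl (fun t : ℝ => t^(p+1)) l).const_mul_left β
    refine (a.add b).congr_left fun t => ?_
    ring
  have hx0 : Tendsto x l (𝓝 0) := 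
    (Rx1.trans (hpow (show 1 ≤ p+1 by omega))).trans_tendsto (by simpa using hlid)
  have Rlog : (fun t => Real.log (1 + x t) - t^(p+1) * β) =O[l] fun t => t^(p+2) := by
    have a : (fun t => Real.log (1 + x t) - x t) =O[l] fun t => t^(p+2) := by
      refine (log_bigO.comp_tendsto hx0).trans ?_
      refine (Rx1.pow 2).trans ?_
      simp only [← pow_mul]
      exact hpow (by omega)
    refine (a.add Rx).congr_left fun t => ?_
    ring
  have hfin : (fun t => (1 / t) * Real.log (L t) - lam - t ^ p * β) =O[l] fun t => t^(p+1) := by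
    have := (isBigO_refl (fun t : ℝ => 1/t) l).mul Rlog
    refine this.congr' ?_ ?_
    · filter_upwards [hev, hx0.eventually_const_lt (show -1 < (0:ℝ) by norm_num)] with t ht hxt
      have ht0 : t ≠ 0 := ht.1.ne'
      have e1 : 1 + x t = Real.exp (-(t*lam)) * L t := by simp only [hx]; ring
      have hL : L t ≠ 0 := by
        intro h; rw [h] at e1; linarith
      rw [e1, Real.log_mul (Real.exp_pos _).ne' hL, Real.log_exp]
      field_simp
      ring
    · filter_upwards [hev] with t ht
      have ht0 : t ≠ 0 := ht.1.ne'
      field_simp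
      ring
  obtain ⟨C, hC, hb⟩ := hfin.exists_pos
  have hb := hb.bound
  obtain ⟨δ, hδ, hsub⟩ := mem_nhdsGT_iff_exists_Ioc_subset.1 hb
  refine ⟨min δ t0, ⟨lt_min hδ ht0, min_le_right _ _⟩, C, hC, fun t ht => ?_⟩
  have := hsub ⟨ht.1, ht.2.trans (min_le_left _ _)⟩
  simp only [Set.mem_ofPred_eq] at this
  rwa [Real.norm_eq_abs, Real.norm_eq_abs, abs_of_pos (pow_pos ht.1 _)] at this

end Aux

theorem proj_quot {d : ℕ} : IsOpenQuotientMap (Torus.proj (d := d)) :=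
  IsOpenQuotientMap.piMap (f := fun (_ : Fin d) (x : ℝ) => (x : AddCircle (1:ℝ)))
    fun _ => QuotientAddGroup.isOpenQuotientMap_mk

theorem TSmooth.cont {d : ℕ} {φ : Torus d → ℝ} (h : TSmooth φ) : Continuous φ :=
  proj_quot.isQuotientMap.continuous_iff.2 (ContDiff.continuous h)

theorem cont_bdd {d : ℕ} {φ : Torus d → ℝ} (h : Continuous φ) : ∃ C : ℝ, ∀ x, |φ x| ≤ C := by
  obtain ⟨C, hC⟩ := isCompact_univ.exists_bound_of_continuousOn h.continuousOn
  exact ⟨C, fun x => hC x trivial⟩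

theorem cont_bddMeas {d : ℕ} {φ : Torus d → ℝ} (h : Continuous φ) : BddMeas φ :=
  ⟨h.measurable, cont_bdd h⟩

theorem cont_int {d : ℕ} {φ : Torus d → ℝ} (h : Continuous φ) (μ : Measure (Torus d))
    [IsFiniteMeasure μ] : Integrable φ μ := by
  obtain ⟨C, hC⟩ := cont_bdd h
  exact Integrable.of_bound h.aestronglyMeasurable C (Filter.Eventually.of_forall hC)

theorem pderiv_smul {d : ℕ} (i : Fin d) (c : ℝ) (f : (Fin d → ℝ) → ℝ) :
    pderiv' i (c • f) = c • pderiv' i f := by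
  funext q
  simp [pderiv', fderiv_const_smul_field]

theorem LgenW_smul {d : ℕ} (b : Fin d → (Fin d → ℝ) → ℝ) (σ : ℝ)
    (Wl f : (Fin d → ℝ) → ℝ) (c : ℝ) : LgenW b σ Wl (c • f) = c • LgenW b σ Wl f := by
  funext q
  simp only [LgenW, Lgen, pderiv_smul, Pi.smul_apply, smul_eq_mul, mul_add, Finset.mul_sum]
  congr 1
  · congr 1 <;> exact Finset.sum_congr rfl fun _ _ => by ring
  · ring

theorem LgenW_iter {d : ℕ} (b : Fin d → (Fin d → ℝ) → ℝ) (σ : ℝ)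
    (Wl f : (Fin d → ℝ) → ℝ) (c : ℝ) (h : LgenW b σ Wl f = c • f) (k : ℕ) :
    (LgenW b σ Wl)^[k] f = c^k • f := by
  induction k with
  | zero => simp
  | succ k ih =>
    rw [Function.iterate_succ_apply', ih, LgenW_smul, h, smul_smul, pow_succ]

theorem abs_int_le {d : ℕ} {φ : Torus d → ℝ} (μ : Measure (Torus d))
    [IsProbabilityMeasure μ] (C : ℝ) (hC : ∀ x, |φ x| ≤ C) : |∫ x, φ x ∂μ| ≤ C := by
  have := norm_integral_le_of_norm_le_const (μ := μ) (f := φ)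
    (Filter.Eventually.of_forall (fun x => by rw [Real.norm_eq_abs]; exact hC x))
  simpa using this

/-- Error estimate on the principal eigenvalue for schemes consistent at order p:
`λ_Δt = (1/Δt) log ∫ Q_Δt^W 1 dν_{W,Δt} = λ + Δt^p (λ_{p+1} − λ^{p+1}/(p+1)!) + O(Δt^{p+1})`. -/
theorem principal_eigenvalue_error_estimate
    (d p : ℕ) (hd : 1 ≤ d) (hp : 1 ≤ p)
    (W : Torus d → ℝ) (hWsm : TSmooth W)
    (ν : Measure (Torus d)) (hνprob : IsProbabilityMeasure ν)
    (ρ : (Fin d → ℝ) → ℝ) (hρsm : ContDiff ℝ (⊤ : ℕ∞) ρ) (hρper : ZPeriodic ρ)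
    (hρpos : ∀ x, 0 < ρ x)
    (hνρ : ∀ φ : Torus d → ℝ, BddMeas φ →
      ∫ x, φ x ∂ν = ∫ x in unitCube d, φ (Torus.proj x) * ρ x)
    (lam : ℝ)
    (hWhat hWfun : Torus d → ℝ)
    (hhatS : TSmooth hWhat) (hhatpos : ∀ x, 0 < hWhat x) (hhatnorm : ∫ x, hWhat x ∂ν = 1)
    (hfunS : TSmooth hWfun) (hfunpos : ∀ x, 0 < hWfun x) (hfunnorm : ∫ x, hWfun x ∂ν = 1)
    (A1 : (Torus d → ℝ) → Torus d → ℝ) (At : ℕ → (Torus d → ℝ) → Torus d → ℝ)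
    (hAt1 : ∀ φ x, At 1 φ x = A1 φ x + W x * φ x)
    (hA1one : ∀ x, A1 (fun _ => (1:ℝ)) x = 0)
    (hA1map : ∀ φ, TSmooth φ → TSmooth (A1 φ))
    (hA1add : ∀ φ ψ, TSmooth φ → TSmooth ψ → A1 (φ + ψ) = A1 φ + A1 ψ)
    (hA1smul : ∀ (c : ℝ) (φ), TSmooth φ → A1 (c • φ) = c • A1 φ)
    (hA1bdd : ∃ c : ℝ, 0 ≤ c ∧ ∃ m : ℕ, ∀ φ, TSmooth φ → ∀ x, |A1 φ x| ≤ c * TCmNorm m φ)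
    (hAtmap : ∀ k ∈ Finset.Icc 2 (p + 1), ∀ φ, TSmooth φ → TSmooth (At k φ))
    (hAtadd : ∀ k ∈ Finset.Icc 2 (p + 1), ∀ φ ψ, TSmooth φ → TSmooth ψ →
      At k (φ + ψ) = At k φ + At k ψ)
    (hAtsmul : ∀ k ∈ Finset.Icc 2 (p + 1), ∀ (c : ℝ) (φ), TSmooth φ →
      At k (c • φ) = c • At k φ)
    (hAtbdd : ∀ k ∈ Finset.Icc 2 (p + 1), ∃ c : ℝ, 0 ≤ c ∧ ∃ m : ℕ,
      ∀ φ, TSmooth φ → ∀ x, |At k φ x| ≤ c * TCmNorm m φ)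
    (A1star : (Torus d → ℝ) → Torus d → ℝ)
    (hA1starmap : ∀ φ, TSmooth φ → TSmooth (A1star φ))
    (hA1staradj : ∀ φ ψ, TSmooth φ → TSmooth ψ →
      ∫ x, A1 φ x * ψ x ∂ν = ∫ x, φ x * A1star ψ x ∂ν)
    (Atp1star : (Torus d → ℝ) → Torus d → ℝ)
    (hAtp1starmap : ∀ φ, TSmooth φ → TSmooth (Atp1star φ))
    (hAtp1staradj : ∀ φ ψ, TSmooth φ → TSmooth ψ →
      ∫ x, At (p + 1) φ x * ψ x ∂ν = ∫ x, φ x * Atp1star ψ x ∂ν)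
    -- (i) the family of weighted evolution operators, its minorization, its invariant
    -- measures and its uniform expansion
    (Δt0 : ℝ) (hΔt0 : 0 < Δt0)
    (κ : ℝ → Kernel (Torus d) (Torus d)) (hκfin : ∀ Δt, IsFiniteKernel (κ Δt))
    (hmin : ∀ Δt ∈ Set.Ioc (0:ℝ) Δt0, ∃ ε ∈ Set.Ioo (0:ℝ) 1, ∃ η : Measure (Torus d),
      IsProbabilityMeasure η ∧ Minorizes (evolOp (κ Δt)) ε η)
    (hQS : ∀ Δt ∈ Set.Ioc (0:ℝ) Δt0, ∀ φ, TSmooth φ → TSmooth (evolOp (κ Δt) φ))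
    (νd : ℝ → Measure (Torus d))
    (hνd : ∀ Δt ∈ Set.Ioc (0:ℝ) Δt0, IsProbabilityMeasure (νd Δt) ∧ FixedPt (κ Δt) (νd Δt))
    (hexp : ∃ c : ℝ, 0 < c ∧ ∃ m : ℕ, ∀ Δt ∈ Set.Ioc (0:ℝ) Δt0, ∀ φ, TSmooth φ → ∀ q,
      |evolOp (κ Δt) φ q - φ q - ∑ k ∈ Finset.Icc 1 (p + 1), Δt ^ k * At k φ q|
        ≤ c * Δt ^ (p + 2) * TCmNorm m φ)
    -- (ii) stability of `A_1 + W - λ` and of its adjoint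
    (hstab : ∀ g : Torus d → ℝ, TSmooth g → ∫ x, g x * hWfun x ∂ν = 0 →
      ∃! u : Torus d → ℝ, TSmooth u ∧ ∫ x, u x * hWfun x ∂ν = 0 ∧
        ∀ x, A1 u x + W x * u x - lam * u x = g x)
    (hstabstar : ∀ g : Torus d → ℝ, TSmooth g → ∫ x, g x * hWhat x ∂ν = 0 →
      ∃! u : Torus d → ℝ, TSmooth u ∧ ∫ x, u x * hWhat x ∂ν = 0 ∧
        ∀ x, A1star u x + W x * u x - lam * u x = g x)
    -- (iii) spectral consistency
    (hspec : ∀ x, A1 hWhat x + W x * hWhat x = lam * hWhat x)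
    (hWlam : ∫ x, W x * hWfun x ∂ν = lam)
    -- (iv) invariance
    (hinv : ∀ k ∈ Finset.Icc 1 p, ∃ a : ℝ, ∀ φ, TSmooth φ →
      ∫ x, At k φ x * hWfun x ∂ν = a * ∫ x, φ x * hWfun x ∂ν)
    -- the correction function: v = h_W f₀ solves `(A_1* + W - λ)(h_W f₀) = g̃`
    (v : Torus d → ℝ) (hvS : TSmooth v) (hvzero : ∫ x, v x * hWhat x ∂ν = 0)
    (hveq : ∀ x, A1star v x + W x * v x - lam * v x =
      -(Atp1star hWfun x) + hWfun x *
        ((∫ y, At (p + 1) hWhat y * hWfun y ∂ν) / (∫ y, hWhat y * hWfun y ∂ν)))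
    -- the underlying continuous generator and consistency of the scheme at order p
    (b : Fin d → (Fin d → ℝ) → ℝ) (σ : ℝ) (hσ : 0 < σ)
    (hbsm : ∀ i, ContDiff ℝ (⊤ : ℕ∞) (b i)) (hbper : ∀ i, ZPeriodic (b i))
    (hA1L : ∀ φ, TSmooth φ → ∀ x : Fin d → ℝ,
      A1 φ (Torus.proj x) = Lgen b σ (fun y => φ (Torus.proj y)) x)
    (hconsist : ∀ k ∈ Finset.Icc 1 p, ∀ φ, TSmooth φ → ∀ x : Fin d → ℝ,
      At k φ (Torus.proj x) =
        (LgenW b σ (fun y => W (Torus.proj y)))^[k] (fun y => φ (Torus.proj y)) x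
          / (Nat.factorial k))
    -- `(𝓛+W)ĥ_W = λ ĥ_W`
    (hspecL : ∀ x : Fin d → ℝ,
      LgenW b σ (fun y => W (Torus.proj y)) (fun y => hWhat (Torus.proj y)) x
        = lam * hWhat (Torus.proj x))
    -- weak adjoint eigenvalue equation for h_W : `∫ ((𝓛+W)φ) h_W dν = λ ∫ φ h_W dν`
    (hadjweak : ∀ φ, TSmooth φ →
      ∫ x, (A1 φ x + W x * φ x) * hWfun x ∂ν = lam * ∫ x, φ x * hWfun x ∂ν) :
    -- conclusion: error estimate on the approximate principal eigenvalue, where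
    -- `λ_{p+1} = ∫ Ã_{p+1}1 dν_W + ∫ W f dν_W` and `f = v/h_W − ∫ (v/h_W) dν_W`
    ∃ Δtstar ∈ Set.Ioc (0:ℝ) Δt0, ∃ C : ℝ, 0 < C ∧
      ∀ Δt ∈ Set.Ioc (0:ℝ) Δtstar,
        |(1 / Δt) * Real.log (∫ x, evolOp (κ Δt) (fun _ => (1:ℝ)) x ∂(νd Δt)) - lam
            - Δt ^ p * (((∫ x, At (p + 1) (fun _ => (1:ℝ)) x * hWfun x ∂ν)
                  + ∫ x, W x * (v x / hWfun x - ∫ y, v y ∂ν) * hWfun x ∂ν)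
                - lam ^ (p + 1) / (Nat.factorial (p + 1)))|
          ≤ C * Δt ^ (p + 1) := by
  classical
  set α : ℝ := (∫ y, At (p + 1) hWhat y * hWfun y ∂ν) / (∫ y, hWhat y * hWfun y ∂ν) with hα
  have hone : TSmooth (fun _ : Torus d => (1:ℝ)) := by
    unfold TSmooth; exact contDiff_const
  have hAtS : ∀ k ∈ Finset.Icc 1 (p+1), ∀ φ, TSmooth φ → TSmooth (At k φ) := by
    intro k hk φ hφ
    by_cases h1 : k = 1
    · subst h1
      have : At 1 φ = fun x => A1 φ x + W x * φ x := funext (hAt1 φ)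
      rw [this]
      exact ContDiff.add (hA1map φ hφ) (ContDiff.mul hWsm hφ)
    · rw [Finset.mem_Icc] at hk
      exact hAtmap k (by rw [Finset.mem_Icc]; omega) φ hφ
  have hpp : p + 1 ∈ Finset.Icc 1 (p+1) := by rw [Finset.mem_Icc]; omega
  have hBS := hAtS (p+1) hpp hWhat hhatS
  have hden : 0 < ∫ y, hWhat y * hWfun y ∂ν := by
    have hc : Continuous fun y => hWhat y * hWfun y := hhatS.cont.mul hfunS.cont
    rw [integral_pos_iff_support_of_nonneg (fun y => (mul_pos (hhatpos y) (hfunpos y)).le)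
      (cont_int hc ν)]
    have : Function.support (fun y => hWhat y * hWfun y) = Set.univ := by
      ext y; simp [(hhatpos y).ne', (hfunpos y).ne']
    rw [this]; simp
  -- the corrector
  obtain ⟨u, ⟨huS, -, hueq⟩, -⟩ := hstab (fun x => α * hWhat x - At (p+1) hWhat x)
    (ContDiff.sub (ContDiff.mul contDiff_const hhatS) hBS) (by
      have e : ∀ x, (α * hWhat x - At (p+1) hWhat x) * hWfun x
          = α * (hWhat x * hWfun x) - At (p+1) hWhat x * hWfun x := fun x => by ring
      have c1 := hhatS.cont
      have c2 := hfunS.cont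
      have c3 := hBS.cont
      simp only [e]
      rw [integral_sub (cont_int (by fun_prop) ν) (cont_int (by fun_prop) ν),
        integral_const_mul, hα]
      field_simp
      ring)
  -- identification of the constant
  have hident : ((∫ x, At (p + 1) (fun _ => (1:ℝ)) x * hWfun x ∂ν)
      + ∫ x, W x * (v x / hWfun x - ∫ y, v y ∂ν) * hWfun x ∂ν) = α := by
    have e1 := hA1staradj _ v hone hvS
    have e2 := hAtp1staradj _ hWfun hone hfunS
    simp only [hA1one, zero_mul, integral_zero, one_mul] at e1 e2
    have c1 := hWsm.cont
    have c2 := hfunS.cont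
    have c3 := hvS.cont
    have c4 := (hA1starmap v hvS).cont
    have c5 := (hAtp1starmap _ hfunS).cont
    have e3 : ∫ x, W x * (v x / hWfun x - ∫ y, v y ∂ν) * hWfun x ∂ν
        = (∫ x, W x * v x ∂ν) - (∫ y, v y ∂ν) * lam := by
      have e : ∀ x, W x * (v x / hWfun x - ∫ y, v y ∂ν) * hWfun x
          = W x * v x - (∫ y, v y ∂ν) * (W x * hWfun x) := fun x => by
        have := (hfunpos x).ne'
        field_simp
      simp only [e]
      rw [integral_sub (cont_int (by fun_prop) ν) (cont_int (by fun_prop) ν), integral_const_mul, hWlam]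
    have e4 : ∫ x, (A1star v x + W x * v x - lam * v x) ∂ν
        = ∫ x, (-(Atp1star hWfun x) + hWfun x * α) ∂ν := by
      simp only [hveq, hα]
    rw [integral_sub (cont_int (by fun_prop) ν) (cont_int (by fun_prop) ν),
      integral_add (cont_int (by fun_prop) ν) (cont_int (by fun_prop) ν),
      integral_add (cont_int (by fun_prop) ν) (cont_int (by fun_prop) ν), integral_neg,
      integral_const_mul, integral_mul_const, hfunnorm] at e4
    rw [e3]
    linarith
  rw [hident]
  -- constants
  obtain ⟨c, hc, m, hexp⟩ := hexp
  have hAtbd : ∀ k, ∃ C : ℝ, k ∈ Finset.Icc 1 (p+1) → ∀ x, |At k u x| ≤ C := by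
    intro k
    by_cases hk : k ∈ Finset.Icc 1 (p+1)
    · obtain ⟨C, hC⟩ := cont_bdd (hAtS k hk u huS).cont
      exact ⟨C, fun _ => hC⟩
    · exact ⟨0, fun h => absurd h hk⟩
  choose G hG using hAtbd
  obtain ⟨M, hM⟩ := cont_bdd huS.cont
  obtain ⟨x0, -, hx0⟩ := isCompact_univ.exists_isMinOn (s := (Set.univ : Set (Torus d)))
    ⟨0, trivial⟩ hhatS.cont.continuousOn
  have hx0 : ∀ x, hWhat x0 ≤ hWhat x := fun x => hx0 (Set.mem_univ x)
  have hhatk : ∀ k ∈ Finset.Icc 1 p, ∀ x, At k hWhat x = lam^k / (Nat.factorial k) * hWhat x := by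
    intro k hk x
    obtain ⟨q, rfl⟩ := proj_quot.surjective x
    rw [hconsist k hk _ hhatS, LgenW_iter b σ _ _ lam (funext hspecL)]
    simp only [Pi.smul_apply, smul_eq_mul]
    ring
  set t1 := min Δt0 1 with ht1
  have ht1pos : 0 < t1 := lt_min hΔt0 one_pos
  have ht1sub : ∀ t ∈ Set.Ioc (0:ℝ) t1, t ∈ Set.Ioc (0:ℝ) Δt0 :=
    fun t ht => ⟨ht.1, ht.2.trans (min_le_left _ _)⟩
  have hsum : ∀ f : ℕ → ℝ, ∑ k ∈ Finset.range (p+1), f k = f 0 + ∑ k ∈ Finset.Icc 1 p, f k := by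
    intro f
    rw [Finset.range_eq_Ico, Finset.sum_eq_sum_Ico_succ_bot (by omega)]
    rfl
  set K1 := c * TCmNorm m hWhat with hK1
  set K2 := c * |TCmNorm m u| + ∑ k ∈ Finset.Icc 2 (p+1), |G k| with hK2
  obtain ⟨Δs, hΔs, C, hC, hfinal⟩ := analytic p hp
    (fun t => ∫ x, evolOp (κ t) (fun _ => (1:ℝ)) x ∂(νd t))
    (fun t => ∫ x, hWhat x ∂(νd t)) (fun t => ∫ x, u x ∂(νd t))
    (fun t => ∫ x, At (p+1) hWhat x ∂(νd t)) lam α (hWhat x0) M (max K1 K2) t1 ht1pos (hhatpos x0)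
    (by
      intro t ht
      have := (hνd t (ht1sub t ht)).1
      have := integral_mono (μ := νd t) (integrable_const (hWhat x0)) (cont_int hhatS.cont _) hx0
      simpa using this)
    (by
      intro t ht
      have := (hνd t (ht1sub t ht)).1
      exact abs_int_le _ M hM)
    (by
      intro t ht
      have ht' := ht1sub t ht
      have := (hνd t ht').1
      have hfix := (hνd t ht').2 hWhat (cont_bddMeas hhatS.cont)
      have c1 := (hQS t ht' _ hhatS).cont
      have c2 := hhatS.cont
      have c3 := hBS.cont
      have hpt : ∀ q, |evolOp (κ t) hWhat q
          - (∑ k ∈ Finset.range (p+1), (t*lam)^k / (Nat.factorial k)) * hWhat q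
          - t^(p+1) * At (p+1) hWhat q| ≤ K1 * t^(p+2) := by
        intro q
        have h := hexp t ht' hWhat hhatS q
        rw [Finset.sum_Icc_succ_top (by omega)] at h
        have e : ∑ k ∈ Finset.Icc 1 p, t^k * At k hWhat q
            = (∑ k ∈ Finset.Icc 1 p, (t*lam)^k / (Nat.factorial k)) * hWhat q := by
          rw [Finset.sum_mul]
          refine Finset.sum_congr rfl fun k hk => ?_
          rw [hhatk k hk, mul_pow]; ring
        rw [e] at h
        rw [hsum]
        calc _ = _ := by
              congr 1
              simp only [pow_zero, Nat.factorial_zero, Nat.cast_one]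
              ring
          _ ≤ _ := h
          _ = _ := by rw [hK1]; ring
      have := abs_int_le (νd t) _ hpt
      rw [integral_sub (cont_int (by fun_prop) _) (cont_int (by fun_prop) _),
        integral_sub (cont_int (by fun_prop) _) (cont_int (by fun_prop) _),
        integral_const_mul, integral_const_mul, hfix] at this
      exact this.trans (mul_le_mul_of_nonneg_right (le_max_left _ _) (pow_pos ht.1 _).le))
    (by
      intro t ht
      have ht' := ht1sub t ht
      have htle : t ≤ 1 := ht.2.trans (min_le_right _ _)
      have := (hνd t ht').1
      have hfix := (hνd t ht').2 u (cont_bddMeas huS.cont)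
      have c1 := (hQS t ht' _ huS).cont
      have c2 := hhatS.cont
      have c3 := hBS.cont
      have c4 := huS.cont
      have hpt : ∀ q, |evolOp (κ t) u q - u q
          - t * (lam * u q + α * hWhat q - At (p+1) hWhat q)| ≤ K2 * t^2 := by
        intro q
        have h := hexp t ht' u huS q
        have e0 : ∑ k ∈ Finset.Icc 1 (p+1), t^k * At k u q
            = t * At 1 u q + ∑ k ∈ Finset.Icc 2 (p+1), t^k * At k u q := by
          have : Finset.Icc 1 (p+1) = insert 1 (Finset.Icc 2 (p+1)) := by
            ext k; simp only [Finset.mem_insert, Finset.mem_Icc]; omega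
          rw [this, Finset.sum_insert (by simp), pow_one]
        have e1 : At 1 u q = lam * u q + α * hWhat q - At (p+1) hWhat q := by
          rw [hAt1]; linarith [hueq q]
        rw [e0, e1] at h
        have e2 : |∑ k ∈ Finset.Icc 2 (p+1), t^k * At k u q|
            ≤ (∑ k ∈ Finset.Icc 2 (p+1), |G k|) * t^2 := by
          refine (Finset.abs_sum_le_sum_abs _ _).trans ?_
          rw [Finset.sum_mul]
          refine Finset.sum_le_sum fun k hk => ?_
          rw [Finset.mem_Icc] at hk
          have hb := (hG k (by rw [Finset.mem_Icc]; omega) q).trans (le_abs_self _)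
          rw [abs_mul, abs_of_pos (pow_pos ht.1 k), mul_comm]
          exact mul_le_mul hb (pow_le_pow_of_le_one ht.1.le htle hk.1) (pow_pos ht.1 _).le
            (abs_nonneg _)
        have e3 : c * t^(p+2) * TCmNorm m u ≤ c * |TCmNorm m u| * t^2 := by
          have a1 : t^(p+2) ≤ t^2 := pow_le_pow_of_le_one ht.1.le htle (by omega)
          have a2 := le_abs_self (TCmNorm m u)
          calc c * t^(p+2) * TCmNorm m u ≤ c * t^(p+2) * |TCmNorm m u| := by
                have := (pow_pos ht.1 (p+2)).le
                gcongr
            _ ≤ c * t^2 * |TCmNorm m u| := by gcongr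
            _ = _ := by ring
        have := (h.trans e3)
        rw [hK2, add_mul]
        rw [abs_le] at this e2 ⊢
        constructor <;> linarith [this.1, this.2, e2.1, e2.2]
      have := abs_int_le (νd t) _ hpt
      rw [integral_sub (cont_int (by fun_prop) _) (cont_int (by fun_prop) _),
        integral_sub (cont_int (by fun_prop) _) (cont_int (by fun_prop) _), integral_const_mul,
        integral_sub (cont_int (by fun_prop) _) (cont_int (by fun_prop) _),
        integral_add (cont_int (by fun_prop) _) (cont_int (by fun_prop) _),
        integral_const_mul, integral_const_mul, hfix] at this
      exact this.trans (mul_le_mul_of_nonneg_right (le_max_right _ _) (pow_pos ht.1 _).le))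
  exact ⟨Δs, ⟨hΔs.1, hΔs.2.trans (min_le_left _ _)⟩, C, hC, hfinal⟩
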